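/- Lower bound of the smoothed max-relative entropy by the Petz–Rényi divergence: For all states ρ, σ on ℂ^d, all ε ∈ (0,1) and all α ∈ [0,1), D_max^ε(ρ‖σ) ≥ D_α(ρ‖σ) + (2/(α−1)) log(1/(1−ε)) in the extended reals. -/

import Mathlib

open scoped Kronecker ComplexOrder

noncomputable section

namespace QCD

attribute [local instance] Classical.propDecidable

variable {n m : Type} [Fintype n] [DecidableEq n] [Fintype m] [DecidableEq m]

/-- The real part of the trace of a complex matrix. -/
def rtr (A : Matrix n n ℂ) : ℝ := (A.trace).re

/-- A quantum state: positive semidefinite with trace one. -/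
def IsState (ρ : Matrix n n ℂ) : Prop := ρ.PosSemidef ∧ ρ.trace = 1

/-- Loewner order: `A ≤ B` iff `B - A` is positive semidefinite. -/
def loewnerLE (A B : Matrix n n ℂ) : Prop := (B - A).PosSemidef

/-- Support containment (for PSD matrices): `ker σ ⊆ ker ρ`. -/
def SuppLE (ρ σ : Matrix n n ℂ) : Prop := ∀ v : n → ℂ, σ.mulVec v = 0 → ρ.mulVec v = 0

/-- Functional calculus for Hermitian matrices (junk value `0` otherwise). -/
def matFun (f : ℝ → ℝ) (A : Matrix n n ℂ) : Matrix n n ℂ :=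
  if hA : A.IsHermitian then
    (hA.eigenvectorUnitary : Matrix n n ℂ) *
      Matrix.diagonal (fun i => (f (hA.eigenvalues i) : ℂ)) *
      (star (hA.eigenvectorUnitary : Matrix n n ℂ))
  else 0

/-- Matrix square root via functional calculus. -/
def msqrt (A : Matrix n n ℂ) : Matrix n n ℂ := matFun Real.sqrt A

/-- Matrix real power taken on the support (`0 ^ t := 0`). -/
def mpow (A : Matrix n n ℂ) (t : ℝ) : Matrix n n ℂ :=
  matFun (fun x => if x = 0 then 0 else x ^ t) A

/-- Matrix base-2 logarithm on the support. -/
def mlog (A : Matrix n n ℂ) : Matrix n n ℂ := matFun (Real.logb 2) A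

/-- Positive part of a Hermitian matrix. -/
def mposPart (A : Matrix n n ℂ) : Matrix n n ℂ := matFun (fun x => max x 0) A

/-- Trace norm. -/
def traceNorm (A : Matrix n m ℂ) : ℝ := rtr (msqrt (A.conjTranspose * A))

/-- Base-2 logarithm as an extended real (`⊥` on nonpositive input). -/
def elog (x : ℝ) : EReal := if x ≤ 0 then ⊥ else ((Real.logb 2 x : ℝ) : EReal)

/-- Base-2 logarithm of an extended real. -/
def elogE (x : EReal) : EReal := if x = ⊤ then ⊤ else elog x.toReal

/-- `2 ^ x` for an extended real `x`. -/
def epow2 (x : EReal) : EReal :=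
  if x = ⊤ then ⊤ else if x = ⊥ then 0 else ((((2:ℝ) ^ x.toReal : ℝ)) : EReal)

/-- Umegaki relative entropy (base 2), `⊤` if the support condition fails. -/
def relEntropy (ρ σ : Matrix n n ℂ) : EReal :=
  if SuppLE ρ σ then ((rtr (ρ * (mlog ρ - mlog σ)) : ℝ) : EReal) else ⊤

/-- Petz–Rényi divergence (base 2). -/
def petzRenyi (α : ℝ) (ρ σ : Matrix n n ℂ) : EReal :=
  if 1 < α ∧ ¬ SuppLE ρ σ then ⊤
  else (((α - 1)⁻¹ : ℝ) : EReal) * elog (rtr (mpow ρ α * mpow σ (1 - α)))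

/-- Geometric (maximal) Rényi divergence (base 2). -/
def geomRenyi (α : ℝ) (ρ σ : Matrix n n ℂ) : EReal :=
  if SuppLE ρ σ then
    (((α - 1)⁻¹ : ℝ) : EReal) *
      elog (rtr (σ * mpow (mpow σ (-(1/2 : ℝ)) * ρ * mpow σ (-(1/2 : ℝ))) α))
  else ⊤

/-- Max-relative entropy (base 2). -/
def dMax (ρ σ : Matrix n n ℂ) : EReal :=
  sInf {x : EReal | ∃ lam : ℝ, x = (lam : EReal) ∧ loewnerLE ρ ((((2:ℝ) ^ lam : ℝ) : ℂ) • σ)}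

/-- Uhlmann fidelity. -/
def fidelity (ρ σ : Matrix n n ℂ) : ℝ := (rtr (msqrt (msqrt σ * ρ * msqrt σ))) ^ 2

/-- Sine (purified) distance. -/
def sineDist (ρ σ : Matrix n n ℂ) : ℝ := Real.sqrt (1 - fidelity ρ σ)

/-- Smoothed max-relative entropy: smoothing over states in the sine-distance ball. -/
def dMaxSmooth (δ : ℝ) (ρ σ : Matrix n n ℂ) : EReal :=
  ⨅ (ρ' : Matrix n n ℂ) (_ : IsState ρ' ∧ sineDist ρ ρ' ≤ δ), dMax ρ' σ

/-- Hypothesis testing divergence (base 2). -/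
def dH (ε : ℝ) (ρ σ : Matrix n n ℂ) : EReal :=
  - elog (sInf {x : ℝ | ∃ T : Matrix n n ℂ,
      T.PosSemidef ∧ ((1 : Matrix n n ℂ) - T).PosSemidef ∧ 1 - ε ≤ rtr (T * ρ) ∧ x = rtr (T * σ)})

/-- The quantity `c_γ(ρ‖σ)`. -/
def cGamma (γ : ℝ) (ρ σ : Matrix n n ℂ) : EReal :=
  ((γ⁻¹ : ℝ) : EReal) *
    elogE (epow2 ((γ : ℝ) * petzRenyi (1 + γ) ρ σ) +
           epow2 (((-γ : ℝ) : EReal) * petzRenyi (1 - γ) ρ σ) + 1)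

/-- Binary entropy (base 2). -/
def binEnt (x : ℝ) : ℝ := -(x * Real.logb 2 x) - (1 - x) * Real.logb 2 (1 - x)

/-- Action of `id_k ⊗ Φ` on block matrices. -/
def blockApply {k : Type} (Φ : Matrix n n ℂ →ₗ[ℂ] Matrix m m ℂ)
    (M : Matrix (k × n) (k × n) ℂ) : Matrix (k × m) (k × m) ℂ :=
  Matrix.of fun p q => Φ (Matrix.of fun a b => M (p.1, a) (q.1, b)) p.2 q.2

/-- Action of `Φ ⊗ id_k` on block matrices. -/
def blockApplyRight {k : Type} (Φ : Matrix n n ℂ →ₗ[ℂ] Matrix m m ℂ)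
    (M : Matrix (n × k) (n × k) ℂ) : Matrix (m × k) (m × k) ℂ :=
  Matrix.of fun p q => Φ (Matrix.of fun a b => M (a, p.2) (b, q.2)) p.1 q.1

/-- Quantum channel: trace preserving and completely positive. -/
def IsQChannel (Φ : Matrix n n ℂ →ₗ[ℂ] Matrix m m ℂ) : Prop :=
  (∀ M : Matrix n n ℂ, (Φ M).trace = M.trace) ∧
  (∀ k : ℕ, 1 ≤ k → ∀ M : Matrix (Fin k × n) (Fin k × n) ℂ, M.PosSemidef →
    (blockApply Φ M).PosSemidef)

/-- `id_k ⊗ Φ` as a linear map. -/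
def blockApplyL (k : Type) (Φ : Matrix n n ℂ →ₗ[ℂ] Matrix m m ℂ) :
    Matrix (k × n) (k × n) ℂ →ₗ[ℂ] Matrix (k × m) (k × m) ℂ where
  toFun := blockApply Φ
  map_add' M N := by
    ext p q
    show Φ (Matrix.of fun a b => (M + N) (p.1, a) (q.1, b)) p.2 q.2 = _
    have h : (Matrix.of fun a b => (M + N) (p.1, a) (q.1, b)) =
        (Matrix.of fun a b => M (p.1, a) (q.1, b)) +
          (Matrix.of fun a b => N (p.1, a) (q.1, b)) := rfl
    rw [h, map_add]
    rfl
  map_smul' c M := by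
    ext p q
    show Φ (Matrix.of fun a b => (c • M) (p.1, a) (q.1, b)) p.2 q.2 = _
    have h : (Matrix.of fun a b => (c • M) (p.1, a) (q.1, b)) =
        c • (Matrix.of fun a b => M (p.1, a) (q.1, b)) := rfl
    rw [h, map_smul]
    rfl

/-- `Φ ⊗ id_k` as a linear map. -/
def blockApplyRightL (k : Type) (Φ : Matrix n n ℂ →ₗ[ℂ] Matrix m m ℂ) :
    Matrix (n × k) (n × k) ℂ →ₗ[ℂ] Matrix (m × k) (m × k) ℂ where
  toFun := blockApplyRight Φ
  map_add' M N := by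
    ext p q
    show Φ (Matrix.of fun a b => (M + N) (a, p.2) (b, q.2)) p.1 q.1 = _
    have h : (Matrix.of fun a b => (M + N) (a, p.2) (b, q.2)) =
        (Matrix.of fun a b => M (a, p.2) (b, q.2)) +
          (Matrix.of fun a b => N (a, p.2) (b, q.2)) := rfl
    rw [h, map_add]
    rfl
  map_smul' c M := by
    ext p q
    show Φ (Matrix.of fun a b => (c • M) (a, p.2) (b, q.2)) p.1 q.1 = _
    have h : (Matrix.of fun a b => (c • M) (a, p.2) (b, q.2)) =
        c • (Matrix.of fun a b => M (a, p.2) (b, q.2)) := rfl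
    rw [h, map_smul]
    rfl

/-- Tensor product of two channels (Kronecker product action). -/
def tensorChannel {n₁ m₁ n₂ m₂ : Type}
    (E₁ : Matrix n₁ n₁ ℂ →ₗ[ℂ] Matrix m₁ m₁ ℂ) (E₂ : Matrix n₂ n₂ ℂ →ₗ[ℂ] Matrix m₂ m₂ ℂ) :
    Matrix (n₁ × n₂) (n₁ × n₂) ℂ →ₗ[ℂ] Matrix (m₁ × m₂) (m₁ × m₂) ℂ :=
  (blockApplyRightL m₂ E₁).comp (blockApplyL n₁ E₂)

/-- Index type for `k`-fold tensor powers. -/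
def tpow (ι : Type) : ℕ → Type
  | 0 => PUnit
  | (k+1) => tpow ι k × ι

def tpowFintype (ι : Type) [Fintype ι] : ∀ k : ℕ, Fintype (tpow ι k)
  | 0 => inferInstanceAs (Fintype PUnit)
  | (k+1) => letI := tpowFintype ι k; inferInstanceAs (Fintype (tpow ι k × ι))

instance (ι : Type) [Fintype ι] (k : ℕ) : Fintype (tpow ι k) := tpowFintype ι k

def tpowDecEq (ι : Type) [DecidableEq ι] : ∀ k : ℕ, DecidableEq (tpow ι k)
  | 0 => inferInstanceAs (DecidableEq PUnit)
  | (k+1) => letI := tpowDecEq ι k; inferInstanceAs (DecidableEq (tpow ι k × ι))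

instance (ι : Type) [DecidableEq ι] (k : ℕ) : DecidableEq (tpow ι k) := tpowDecEq ι k

/-- `k`-fold Kronecker tensor power of a matrix. -/
def tpowMat (ρ : Matrix n n ℂ) : ∀ k : ℕ, Matrix (tpow n k) (tpow n k) ℂ
  | 0 => 1
  | (k+1) => (tpowMat ρ k) ⊗ₖ ρ

/-- `k`-fold tensor power of a channel. -/
def tpowChannel (Φ : Matrix n n ℂ →ₗ[ℂ] Matrix m m ℂ) :
    ∀ k : ℕ, Matrix (tpow n k) (tpow n k) ℂ →ₗ[ℂ] Matrix (tpow m k) (tpow m k) ℂ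
  | 0 => LinearMap.id
  | (k+1) => tensorChannel (tpowChannel Φ k) Φ

/-- Channel divergence induced by a divergence `𝔇` on states:
sup over `k ≥ 1` and input states `ν` on `ℂ^k ⊗ ℂ^d`. -/
def chDiv (𝔇 : ∀ (p : Type) [Fintype p] [DecidableEq p], Matrix p p ℂ → Matrix p p ℂ → EReal)
    (E F : Matrix n n ℂ →ₗ[ℂ] Matrix m m ℂ) : EReal :=
  ⨆ (k : ℕ) (_ : 1 ≤ k) (ν : Matrix (Fin k × n) (Fin k × n) ℂ) (_ : IsState ν),
    𝔇 (Fin k × m) (blockApply E ν) (blockApply F ν)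

/-- The geometric Rényi divergence as a divergence family. -/
def geomD (α : ℝ) : ∀ (p : Type) [Fintype p] [DecidableEq p],
    Matrix p p ℂ → Matrix p p ℂ → EReal :=
  fun _ _ _ => geomRenyi α

/-- The Umegaki relative entropy as a divergence family. -/
def relD : ∀ (p : Type) [Fintype p] [DecidableEq p],
    Matrix p p ℂ → Matrix p p ℂ → EReal :=
  fun _ _ _ => relEntropy

/-- The hypothesis testing divergence as a divergence family. -/
def dHD (ε : ℝ) : ∀ (p : Type) [Fintype p] [DecidableEq p],
    Matrix p p ℂ → Matrix p p ℂ → EReal :=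
  fun _ _ _ => dH ε

/-- Regularized channel relative entropy. -/
def regRelEntropy (E F : Matrix n n ℂ →ₗ[ℂ] Matrix m m ℂ) : EReal :=
  ⨆ (k : ℕ) (_ : 1 ≤ k),
    (((k : ℝ)⁻¹ : ℝ) : EReal) * chDiv relD (tpowChannel E k) (tpowChannel F k)

end QCD

/-!
Write `Q_α(ρ‖τ) = Tr[ρ^α τ^(1-α)]`. For states, `F(ρ, τ) ≤ Q_α(ρ‖τ)`: the polar decomposition of
`√ρ √τ` gives a contraction `W` with `√F = Tr[Wᴴ √ρ √τ]`, and Cauchy–Schwarz for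
`X = ρ^((1-α)/2) W τ^(α/2)` and `Y = ρ^(α/2) τ^((1-α)/2)` gives
`F ≤ Tr[Wᴴ ρ^(1-α) W τ^α] · Q_α(ρ‖τ)`. In eigenbases of `ρ` and `τ` the first factor is a sum of
terms `p^(1-α) q^α` with nonnegative weights, so Young's inequality bounds it by
`(1 - α) Tr ρ + α Tr τ = 1`.

If moreover `τ ≤ 2^λ σ`, then operator monotonicity of `x ↦ x^(1-α)` gives
`Q_α(ρ‖τ) ≤ 2^(λ(1-α)) Q_α(ρ‖σ)`. For `τ` in the `ε`-ball around `ρ` this yields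
`1 - ε² ≤ F(ρ, τ) ≤ 2^(λ(1-α)) Q_α(ρ‖σ)`. Taking logarithms gives the bound with `1 / (1 - ε²)` to
the first power, which improves on the square of `1 / (1 - ε)`.
-/

namespace QCD

section Development

open scoped Matrix MatrixOrder

variable {n m : Type} [Fintype n] [Fintype m]

/-- The real power with `0 ^ t := 0` for every exponent, `t = 0` included: the scalar function
behind `mpow`, so that `mpow A 0` is the projection onto the support of `A`. -/
def suppRpow (t x : ℝ) : ℝ := if x = 0 then 0 else x ^ t

lemma suppRpow_of_ne_zero {t : ℝ} (ht : t ≠ 0) (x : ℝ) : suppRpow t x = x ^ t := by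
  unfold suppRpow
  split_ifs with hx
  · rw [hx, Real.zero_rpow ht]
  · rfl

lemma suppRpow_nonneg (t : ℝ) {x : ℝ} (hx : 0 ≤ x) : 0 ≤ suppRpow t x := by
  unfold suppRpow
  split_ifs <;> positivity

lemma suppRpow_le_rpow (t : ℝ) {x : ℝ} (hx : 0 ≤ x) : suppRpow t x ≤ x ^ t := by
  unfold suppRpow
  split_ifs
  · positivity
  · rfl

lemma suppRpow_add (s t : ℝ) {x : ℝ} (hx : 0 ≤ x) :
    suppRpow (s + t) x = suppRpow s x * suppRpow t x := by
  unfold suppRpow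
  split_ifs with h
  · simp
  · exact Real.rpow_add (hx.lt_of_ne' h) s t

lemma suppRpow_mul (t : ℝ) {c x : ℝ} (hc : 0 < c) (hx : 0 ≤ x) :
    suppRpow t (c * x) = c ^ t * suppRpow t x := by
  simp [suppRpow, hc.ne', Real.mul_rpow hc.le hx]

lemma suppRpow_mul_suppRpow_le {t x y : ℝ} (ht₀ : 0 ≤ t) (ht₁ : t ≤ 1) (hx : 0 ≤ x) (hy : 0 ≤ y) :
    suppRpow (1 - t) x * suppRpow t y ≤ (1 - t) * x + t * y :=
  calc
    suppRpow (1 - t) x * suppRpow t y ≤ x ^ (1 - t) * y ^ t :=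
      mul_le_mul (suppRpow_le_rpow _ hx) (suppRpow_le_rpow _ hy) (suppRpow_nonneg _ hy)
        (Real.rpow_nonneg hx _)
    _ ≤ (1 - t) * x + t * y :=
      Real.geom_mean_le_arith_mean2_weighted (sub_nonneg.mpr ht₁) ht₀ hx hy (sub_add_cancel 1 t)

lemma rtr_mul_comm (A : Matrix n m ℂ) (B : Matrix m n ℂ) : rtr (A * B) = rtr (B * A) := by
  rw [rtr, rtr, Matrix.trace_mul_comm]

lemma rtr_nonneg {A : Matrix n n ℂ} (hA : A.PosSemidef) : 0 ≤ rtr A :=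
  (Complex.nonneg_iff.mp hA.trace_nonneg).1

lemma rtr_smul (r : ℝ) (A : Matrix n n ℂ) : rtr (r • A) = r * rtr A := by
  simp [rtr, Matrix.trace_smul]

lemma IsState.rtr_eq_one {ρ : Matrix n n ℂ} (hρ : IsState ρ) : rtr ρ = 1 := by
  simp [rtr, hρ.2]

lemma rtr_mul_le_rtr_mul {A P Q : Matrix n n ℂ} (hA : A.PosSemidef) (hPQ : P ≤ Q) :
    rtr (A * P) ≤ rtr (A * Q) := by
  classical
  obtain ⟨B, rfl⟩ := CStarAlgebra.nonneg_iff_eq_star_mul_self.mp hA.nonneg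
  have h : 0 ≤ rtr (B * (Q - P) * Bᴴ) :=
    rtr_nonneg ((Matrix.le_iff.mp hPQ).mul_mul_conjTranspose_same B)
  rw [rtr_mul_comm, ← mul_assoc, mul_sub] at h
  simpa [rtr, Matrix.trace_sub, Matrix.star_eq_conjTranspose] using h

lemma sq_rtr_conjTranspose_mul_le (A B : Matrix n m ℂ) :
    rtr (Aᴴ * B) ^ 2 ≤ rtr (Aᴴ * A) * rtr (Bᴴ * B) := by
  let hilbertSchmidt : LinearMap.BilinForm ℝ (Matrix n m ℂ) :=
    LinearMap.mk₂ ℝ (fun X Y => rtr (Xᴴ * Y))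
      (fun X₁ X₂ Y => by simp [rtr, Matrix.add_mul])
      (fun r X Y => by simp [rtr])
      (fun X Y₁ Y₂ => by simp [rtr, Matrix.mul_add])
      (fun r X Y => by simp [rtr])
  refine hilbertSchmidt.apply_sq_le_of_symm
    (fun X => rtr_nonneg (Matrix.posSemidef_conjTranspose_mul_self X)) ⟨fun X Y => ?_⟩ A B
  change rtr (Xᴴ * Y) = rtr (Yᴴ * X)
  rw [show Yᴴ * X = (Xᴴ * Y)ᴴ by simp, rtr, rtr, Matrix.trace_conjTranspose]
  simp

variable [DecidableEq n]

lemma matFun_eq_cfc (f : ℝ → ℝ) (A : Matrix n n ℂ) : matFun f A = cfc f A := by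
  unfold matFun
  split_ifs with hA
  · rw [hA.cfc_eq, Matrix.IsHermitian.cfc, Unitary.conjStarAlgAut_apply]
    rfl
  · exact (cfc_apply_of_not_predicate A hA).symm

lemma mpow_eq_cfc (A : Matrix n n ℂ) (t : ℝ) : mpow A t = cfc (suppRpow t) A := by
  rw [mpow, matFun_eq_cfc]
  congr 1

lemma isHermitian_mpow (A : Matrix n n ℂ) (t : ℝ) : (mpow A t).IsHermitian := by
  rw [mpow_eq_cfc]
  exact cfc_predicate _ A

lemma continuousOn_spectrum (f : ℝ → ℝ) (A : Matrix n n ℂ) : ContinuousOn f (spectrum ℝ A) :=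
  A.finite_real_spectrum.continuousOn f

lemma cfc_congr_of_posSemidef {f g : ℝ → ℝ} {A : Matrix n n ℂ} (hA : A.PosSemidef)
    (hfg : ∀ x, 0 ≤ x → f x = g x) : cfc f A = cfc g A :=
  cfc_congr fun x hx => hfg x (spectrum_nonneg_of_nonneg hA.nonneg hx)

lemma posSemidef_mpow {A : Matrix n n ℂ} (hA : A.PosSemidef) (t : ℝ) : (mpow A t).PosSemidef := by
  rw [mpow_eq_cfc]
  exact Matrix.nonneg_iff_posSemidef.mp <| cfc_nonneg fun x hx =>
    suppRpow_nonneg t (spectrum_nonneg_of_nonneg hA.nonneg hx)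

lemma mpow_add {A : Matrix n n ℂ} (hA : A.PosSemidef) (s t : ℝ) :
    mpow A (s + t) = mpow A s * mpow A t := by
  simp only [mpow_eq_cfc]
  rw [← cfc_mul _ _ _ (continuousOn_spectrum _ A) (continuousOn_spectrum _ A)]
  exact cfc_congr_of_posSemidef hA fun x hx => suppRpow_add s t hx

lemma mpow_one {A : Matrix n n ℂ} (hA : A.IsHermitian) : mpow A 1 = A := by
  have h : suppRpow 1 = id := funext fun x => by
    rw [suppRpow_of_ne_zero one_ne_zero, Real.rpow_one, id]
  rw [mpow_eq_cfc, h, cfc_id ℝ A hA.isSelfAdjoint]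

lemma msqrt_eq_mpow (A : Matrix n n ℂ) : msqrt A = mpow A (1 / 2) := by
  rw [msqrt, matFun_eq_cfc, mpow_eq_cfc]
  congr 1
  ext x
  rw [suppRpow_of_ne_zero (by norm_num), Real.sqrt_eq_rpow]

lemma mpow_smul {A : Matrix n n ℂ} (hA : A.PosSemidef) {c : ℝ} (hc : 0 < c) (t : ℝ) :
    mpow (c • A) t = c ^ t • mpow A t := by
  have hcont : ContinuousOn (suppRpow t) ((c * ·) '' spectrum ℝ A) :=
    (A.finite_real_spectrum.image _).continuousOn _
  rw [mpow_eq_cfc, mpow_eq_cfc]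
  calc
    cfc (suppRpow t) (c • A) = cfc (fun x => suppRpow t (c * x)) A :=
      (cfc_comp_const_mul c (suppRpow t) A hcont hA.1).symm
    _ = cfc (fun x => c ^ t * suppRpow t x) A :=
      cfc_congr_of_posSemidef hA fun x hx => suppRpow_mul t hc hx
    _ = c ^ t • cfc (suppRpow t) A :=
      cfc_const_mul (c ^ t) (suppRpow t) A (continuousOn_spectrum _ A)

section OperatorMonotone

open scoped Matrix.Norms.L2Operator

lemma mpow_eq_rpow {A : Matrix n n ℂ} (hA : A.PosSemidef) {t : ℝ} (ht : t ≠ 0) :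
    mpow A t = A ^ t := by
  rw [CFC.rpow_eq_cfc_real hA.nonneg, mpow_eq_cfc, funext (suppRpow_of_ne_zero ht)]

lemma mpow_le_mpow {A B : Matrix n n ℂ} (hA : A.PosSemidef) (hAB : A ≤ B) {t : ℝ}
    (ht₀ : 0 < t) (ht₁ : t ≤ 1) : mpow A t ≤ mpow B t := by
  have hB : B.PosSemidef := Matrix.nonneg_iff_posSemidef.mp (hA.nonneg.trans hAB)
  rw [mpow_eq_rpow hA ht₀.ne', mpow_eq_rpow hB ht₀.ne']
  exact CFC.rpow_le_rpow ⟨ht₀.le, ht₁⟩ hAB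

end OperatorMonotone

lemma mul_conjTranspose_le_one {W : Matrix n m ℂ} (hW : W * Wᴴ * W = W) : W * Wᴴ ≤ 1 := by
  have hproj : IsStarProjection (W * Wᴴ) :=
    { isIdempotentElem := by rw [IsIdempotentElem, ← Matrix.mul_assoc, hW]
      isSelfAdjoint := Matrix.isHermitian_mul_conjTranspose_self W }
  exact hproj.le_one

variable [DecidableEq m]

lemma exists_conjTranspose_mul_eq_msqrt (M : Matrix n m ℂ) :
    ∃ W : Matrix n m ℂ, Wᴴ * M = msqrt (Mᴴ * M) ∧ Wᴴ * W ≤ 1 ∧ W * Wᴴ ≤ 1 := by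
  set H := Mᴴ * M with hH
  have hHpos : H.PosSemidef := Matrix.posSemidef_conjTranspose_mul_self M
  -- `mpow` is supported off the kernel, so this is the partial isometry of the polar decomposition.
  set W := M * mpow H (-(1 / 2))
  have hWM : Wᴴ * M = mpow H (1 / 2) := by
    calc
      Wᴴ * M = mpow H (-(1 / 2)) * mpow H 1 := by
        rw [Matrix.conjTranspose_mul, (isHermitian_mpow _ _).eq, Matrix.mul_assoc, ← hH,
          mpow_one hHpos.1]
      _ = mpow H (1 / 2) := by rw [← mpow_add hHpos]; norm_num
  have hW : W * Wᴴ * W = W := by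
    calc
      W * Wᴴ * W = M * (mpow H (-(1 / 2)) * (Wᴴ * M) * mpow H (-(1 / 2))) := by
        simp only [W, Matrix.mul_assoc]
      _ = W := by
        rw [hWM, ← mpow_add hHpos, ← mpow_add hHpos]
        norm_num [W]
  have hW' : Wᴴ * Wᴴᴴ * Wᴴ = Wᴴ := by
    simpa [Matrix.mul_assoc] using congrArg Matrix.conjTranspose hW
  refine ⟨W, by rw [hWM, msqrt_eq_mpow], ?_, mul_conjTranspose_le_one hW⟩
  simpa using mul_conjTranspose_le_one hW'

/-- The squared moduli of the matrix entries of `W` with respect to eigenbases of `A` and `B`.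
For `W = 1` these are the Nussbaum–Szkoła weights, which turn traces of functions of two
noncommuting matrices into classical sums over pairs of eigenvalues. -/
def eigenOverlap {A : Matrix n n ℂ} {B : Matrix m m ℂ} (hA : A.IsHermitian) (hB : B.IsHermitian)
    (W : Matrix n m ℂ) (i : n) (j : m) : ℝ :=
  Complex.normSq ((star (hA.eigenvectorUnitary : Matrix n n ℂ) * W *
    (hB.eigenvectorUnitary : Matrix m m ℂ)) i j)

lemma rtr_conjTranspose_mul_cfc_mul_cfc {A : Matrix n n ℂ} {B : Matrix m m ℂ}
    (hA : A.IsHermitian) (hB : B.IsHermitian) (W : Matrix n m ℂ) (f g : ℝ → ℝ) :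
    rtr (Wᴴ * cfc f A * W * cfc g B) =
      ∑ i, ∑ j, f (hA.eigenvalues i) * g (hB.eigenvalues j) * eigenOverlap hA hB W i j := by
  set U : Matrix n n ℂ := (hA.eigenvectorUnitary : Matrix n n ℂ)
  set V : Matrix m m ℂ := (hB.eigenvectorUnitary : Matrix m m ℂ)
  set D := Matrix.diagonal fun i => (f (hA.eigenvalues i) : ℂ)
  set E := Matrix.diagonal fun j => (g (hB.eigenvalues j) : ℂ)
  set K := Uᴴ * W * V
  have hf : cfc f A = U * D * Uᴴ := by rw [← matFun_eq_cfc, matFun, dif_pos hA]; rfl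
  have hg : cfc g B = V * E * Vᴴ := by rw [← matFun_eq_cfc, matFun, dif_pos hB]; rfl
  calc
    rtr (Wᴴ * cfc f A * W * cfc g B) = rtr ((Wᴴ * U * D * Uᴴ * W * V * E) * Vᴴ) := by
      simp only [hf, hg, Matrix.mul_assoc]
    _ = rtr (Kᴴ * (D * K * E)) := by
      rw [rtr_mul_comm]
      simp [K, Matrix.mul_assoc]
    _ = rtr (D * K * E * Kᴴ) := rtr_mul_comm _ _
    _ = _ := by
      simp only [rtr, Matrix.trace, Matrix.diag_apply, Matrix.mul_apply (M := D * K * E),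
        Complex.re_sum]
      refine Finset.sum_congr rfl fun i _ => Finset.sum_congr rfl fun j _ => ?_
      have hij : eigenOverlap hA hB W i j = Complex.normSq (K i j) := rfl
      simp only [D, E, Matrix.diagonal_mul, Matrix.mul_diagonal, Matrix.conjTranspose_apply]
      rw [hij, mul_right_comm _ (K i j), mul_assoc, RCLike.star_def, Complex.mul_conj]
      norm_cast

lemma rtr_conjTranspose_mul_mpow_mul_mpow_le {A : Matrix n n ℂ} {B : Matrix m m ℂ}
    (hA : A.PosSemidef) (hB : B.PosSemidef) (W : Matrix n m ℂ) {t : ℝ} (ht₀ : 0 ≤ t) (ht₁ : t ≤ 1) :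
    rtr (Wᴴ * mpow A (1 - t) * W * mpow B t) ≤
      (1 - t) * rtr (A * (W * Wᴴ)) + t * rtr (B * (Wᴴ * W)) := by
  set w := eigenOverlap hA.1 hB.1 W
  have hw (i : n) (j : m) : 0 ≤ w i j := Complex.normSq_nonneg _
  have hsum := rtr_conjTranspose_mul_cfc_mul_cfc hA.1 hB.1 W
  have hsumA : rtr (A * (W * Wᴴ)) = ∑ i, ∑ j, hA.1.eigenvalues i * w i j := by
    have h := hsum id fun _ => 1
    rw [cfc_id ℝ A hA.1.isSelfAdjoint, cfc_const_one ℝ B hB.1.isSelfAdjoint] at h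
    rw [← Matrix.mul_assoc, rtr_mul_comm, ← Matrix.mul_assoc]
    simpa using h
  have hsumB : rtr (B * (Wᴴ * W)) = ∑ i, ∑ j, hB.1.eigenvalues j * w i j := by
    have h := hsum (fun _ => 1) id
    rw [cfc_id ℝ B hB.1.isSelfAdjoint, cfc_const_one ℝ A hA.1.isSelfAdjoint] at h
    rw [rtr_mul_comm]
    simpa using h
  rw [mpow_eq_cfc, mpow_eq_cfc, hsum, hsumA, hsumB]
  simp only [Finset.mul_sum, ← Finset.sum_add_distrib]
  refine Finset.sum_le_sum fun i _ => Finset.sum_le_sum fun j _ => ?_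
  have hyoung := suppRpow_mul_suppRpow_le ht₀ ht₁
    (hA.eigenvalues_nonneg i) (hB.eigenvalues_nonneg j)
  linarith [mul_le_mul_of_nonneg_right hyoung (hw i j)]

lemma rtr_conjTranspose_mul_mpow_mul_mpow_le_of_le_one {A : Matrix n n ℂ} {B : Matrix m m ℂ}
    (hA : A.PosSemidef) (hB : B.PosSemidef) {W : Matrix n m ℂ} (hW : Wᴴ * W ≤ 1) (hW' : W * Wᴴ ≤ 1)
    {t : ℝ} (ht₀ : 0 ≤ t) (ht₁ : t ≤ 1) :
    rtr (Wᴴ * mpow A (1 - t) * W * mpow B t) ≤ (1 - t) * rtr A + t * rtr B := by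
  have hAW : rtr (A * (W * Wᴴ)) ≤ rtr A := by simpa using rtr_mul_le_rtr_mul hA hW'
  have hBW : rtr (B * (Wᴴ * W)) ≤ rtr B := by simpa using rtr_mul_le_rtr_mul hB hW
  refine (rtr_conjTranspose_mul_mpow_mul_mpow_le hA hB W ht₀ ht₁).trans ?_
  gcongr

variable {ρ σ τ : Matrix n n ℂ}

/-- The Petz quasi-entropy `Q_α(ρ‖σ) = Tr[ρ^α σ^(1-α)]`, whose logarithm is `(α - 1) D_α(ρ‖σ)`. -/
def petzQ (α : ℝ) (ρ σ : Matrix n n ℂ) : ℝ := rtr (mpow ρ α * mpow σ (1 - α))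

lemma petzQ_nonneg (hρ : ρ.PosSemidef) (hσ : σ.PosSemidef) (α : ℝ) : 0 ≤ petzQ α ρ σ := by
  have h := rtr_mul_le_rtr_mul (posSemidef_mpow hρ α) (posSemidef_mpow hσ (1 - α)).nonneg
  simpa [rtr, petzQ] using h

lemma petzQ_le_petzQ (hρ : ρ.PosSemidef) (hσ : σ.PosSemidef) (hστ : σ ≤ τ) {α : ℝ} (hα₀ : 0 ≤ α)
    (hα₁ : α < 1) : petzQ α ρ σ ≤ petzQ α ρ τ :=
  rtr_mul_le_rtr_mul (posSemidef_mpow hρ α) <|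
    mpow_le_mpow hσ hστ (sub_pos.mpr hα₁) (sub_le_self 1 hα₀)

lemma petzQ_smul (ρ : Matrix n n ℂ) (hσ : σ.PosSemidef) {c : ℝ} (hc : 0 < c) (α : ℝ) :
    petzQ α ρ (c • σ) = c ^ (1 - α) * petzQ α ρ σ := by
  rw [petzQ, petzQ, mpow_smul hσ hc, Matrix.mul_smul, rtr_smul]

lemma rtr_conjTranspose_mul_mpow_half_sq_le (hρ : ρ.PosSemidef) (hτ : τ.PosSemidef)
    (W : Matrix n n ℂ) (α : ℝ) :
    rtr (Wᴴ * (mpow ρ (1 / 2) * mpow τ (1 / 2))) ^ 2 ≤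
      rtr (Wᴴ * mpow ρ (1 - α) * W * mpow τ α) * petzQ α ρ τ := by
  set X := mpow ρ ((1 - α) / 2) * W * mpow τ (α / 2)
  set Y := mpow ρ (α / 2) * mpow τ ((1 - α) / 2)
  have mpow_halves {A : Matrix n n ℂ} (hA : A.PosSemidef) (s : ℝ) :
      mpow A s = mpow A (s / 2) * mpow A (s / 2) := by
    rw [← mpow_add hA, add_halves]
  have hXY : rtr (Xᴴ * Y) = rtr (Wᴴ * (mpow ρ (1 / 2) * mpow τ (1 / 2))) := by
    have hsplit : (1 / 2 : ℝ) = (1 - α) / 2 + α / 2 := by ring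
    have hρ' : mpow ρ (1 / 2) = mpow ρ ((1 - α) / 2) * mpow ρ (α / 2) := by
      rw [hsplit, mpow_add hρ]
    have hτ' : mpow τ (1 / 2) = mpow τ ((1 - α) / 2) * mpow τ (α / 2) := by
      rw [hsplit, mpow_add hτ]
    simp only [X, Y, Matrix.conjTranspose_mul, (isHermitian_mpow _ _).eq]
    rw [Matrix.mul_assoc, rtr_mul_comm]
    simp only [hρ', hτ', Matrix.mul_assoc]
  have hXX : rtr (Xᴴ * X) = rtr (Wᴴ * mpow ρ (1 - α) * W * mpow τ α) := by
    simp only [X, Matrix.conjTranspose_mul, (isHermitian_mpow _ _).eq]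
    rw [Matrix.mul_assoc, rtr_mul_comm]
    simp only [mpow_halves hρ (1 - α), mpow_halves hτ α, Matrix.mul_assoc]
  have hYY : rtr (Yᴴ * Y) = petzQ α ρ τ := by
    simp only [petzQ, Y, Matrix.conjTranspose_mul, (isHermitian_mpow _ _).eq]
    rw [Matrix.mul_assoc, rtr_mul_comm]
    simp only [mpow_halves hρ α, mpow_halves hτ (1 - α), Matrix.mul_assoc]
  rw [← hXY, ← hXX, ← hYY]
  exact sq_rtr_conjTranspose_mul_le X Y

lemma exists_fidelity_eq_sq_rtr (hρ : ρ.PosSemidef) (τ : Matrix n n ℂ) :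
    ∃ W : Matrix n n ℂ, fidelity ρ τ = rtr (Wᴴ * (mpow ρ (1 / 2) * mpow τ (1 / 2))) ^ 2 ∧
      Wᴴ * W ≤ 1 ∧ W * Wᴴ ≤ 1 := by
  obtain ⟨W, hWM, hW, hW'⟩ := exists_conjTranspose_mul_eq_msqrt (mpow ρ (1 / 2) * mpow τ (1 / 2))
  refine ⟨W, ?_, hW, hW'⟩
  have hρ_half : mpow ρ (1 / 2) * mpow ρ (1 / 2) = ρ := by
    rw [← mpow_add hρ, add_halves, mpow_one hρ.1]
  have hM : msqrt τ * ρ * msqrt τ =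
      (mpow ρ (1 / 2) * mpow τ (1 / 2))ᴴ * (mpow ρ (1 / 2) * mpow τ (1 / 2)) := by
    nth_rw 1 [← hρ_half]
    simp only [msqrt_eq_mpow, Matrix.conjTranspose_mul, (isHermitian_mpow _ _).eq,
      Matrix.mul_assoc]
  rw [fidelity, hM, hWM]

lemma fidelity_le_mul_petzQ (hρ : ρ.PosSemidef) (hτ : τ.PosSemidef) {α : ℝ} (hα₀ : 0 ≤ α)
    (hα₁ : α ≤ 1) : fidelity ρ τ ≤ ((1 - α) * rtr ρ + α * rtr τ) * petzQ α ρ τ := by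
  obtain ⟨W, hF, hW, hW'⟩ := exists_fidelity_eq_sq_rtr hρ τ
  calc
    fidelity ρ τ = rtr (Wᴴ * (mpow ρ (1 / 2) * mpow τ (1 / 2))) ^ 2 := hF
    _ ≤ rtr (Wᴴ * mpow ρ (1 - α) * W * mpow τ α) * petzQ α ρ τ :=
      rtr_conjTranspose_mul_mpow_half_sq_le hρ hτ W α
    _ ≤ ((1 - α) * rtr ρ + α * rtr τ) * petzQ α ρ τ :=
      mul_le_mul_of_nonneg_right
        (rtr_conjTranspose_mul_mpow_mul_mpow_le_of_le_one hρ hτ hW hW' hα₀ hα₁)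
        (petzQ_nonneg hρ hτ α)

lemma IsState.fidelity_le_petzQ (hρ : IsState ρ) (hτ : IsState τ) {α : ℝ} (hα₀ : 0 ≤ α)
    (hα₁ : α ≤ 1) : fidelity ρ τ ≤ petzQ α ρ τ := by
  simpa [hρ.rtr_eq_one, hτ.rtr_eq_one] using fidelity_le_mul_petzQ hρ.1 hτ.1 hα₀ hα₁

lemma two_div_mul_logb_le {ε α : ℝ} (hε₀ : 0 ≤ ε) (hε₁ : ε < 1) (hα : α ≤ 1) :
    2 / (α - 1) * Real.logb 2 (1 / (1 - ε)) ≤ 1 / (α - 1) * Real.logb 2 (1 / (1 - ε ^ 2)) := by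
  have hε : 0 < 1 - ε := sub_pos.mpr hε₁
  have hlog : 2 * Real.logb 2 (1 - ε) ≤ Real.logb 2 (1 - ε ^ 2) := by
    calc
      2 * Real.logb 2 (1 - ε) = Real.logb 2 ((1 - ε) ^ 2) := by simp [Real.logb_pow]
      _ ≤ Real.logb 2 (1 - ε ^ 2) :=
        Real.logb_le_logb_of_le one_lt_two (pow_pos hε 2) (by nlinarith)
  have hα' : 1 / (α - 1) ≤ 0 := one_div_nonpos.mpr (sub_nonpos.mpr hα)
  simp only [one_div, Real.logb_inv] at hα' ⊢
  calc
    2 / (α - 1) * -Real.logb 2 (1 - ε) = (α - 1)⁻¹ * -(2 * Real.logb 2 (1 - ε)) := by ring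
    _ ≤ (α - 1)⁻¹ * -Real.logb 2 (1 - ε ^ 2) :=
      mul_le_mul_of_nonpos_left (neg_le_neg hlog) hα'

lemma petzRenyi_eq_coe {α : ℝ} (hα : α < 1) (hQ : 0 < petzQ α ρ σ) :
    petzRenyi α ρ σ = (((α - 1)⁻¹ * Real.logb 2 (petzQ α ρ σ) : ℝ) : EReal) := by
  have helog : elog (petzQ α ρ σ) = (Real.logb 2 (petzQ α ρ σ) : ℝ) := if_neg hQ.not_ge
  rw [petzRenyi, if_neg fun h => hα.not_gt h.1, EReal.coe_mul, ← helog, petzQ]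

lemma petzRenyi_add_le_coe {α x l : ℝ} (hα : α < 1) (hx : 0 < x)
    (hxQ : x ≤ (2 ^ l) ^ (1 - α) * petzQ α ρ σ) :
    petzRenyi α ρ σ + ((1 / (α - 1) * Real.logb 2 (1 / x) : ℝ) : EReal) ≤ (l : EReal) := by
  have hQ : 0 < petzQ α ρ σ := pos_of_mul_pos_right (hx.trans_le hxQ) (by positivity)
  have hlog : Real.logb 2 x ≤ l * (1 - α) + Real.logb 2 (petzQ α ρ σ) := by
    calc
      Real.logb 2 x ≤ Real.logb 2 ((2 ^ l) ^ (1 - α) * petzQ α ρ σ) :=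
        Real.logb_le_logb_of_le one_lt_two hx hxQ
      _ = l * (1 - α) + Real.logb 2 (petzQ α ρ σ) := by
        rw [← Real.rpow_mul zero_le_two, Real.logb_mul (by positivity) hQ.ne',
          Real.logb_rpow two_pos one_lt_two.ne']
  rw [petzRenyi_eq_coe hα hQ, ← EReal.coe_add, EReal.coe_le_coe_iff, one_div x, Real.logb_inv]
  have hα' : 0 < 1 - α := sub_pos.mpr hα
  calc
    (α - 1)⁻¹ * Real.logb 2 (petzQ α ρ σ) + 1 / (α - 1) * -Real.logb 2 x
      = (Real.logb 2 x - Real.logb 2 (petzQ α ρ σ)) / (1 - α) := by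
        rw [← neg_sub 1 α]
        field_simp
        ring
    _ ≤ l := by
      rw [div_le_iff₀ hα']
      linarith

lemma petzRenyi_add_le_dMax (hρ : IsState ρ) (hτ : IsState τ) (hσ : σ.PosSemidef) {α x : ℝ}
    (hα₀ : 0 ≤ α) (hα₁ : α < 1) (hx : 0 < x) (hxF : x ≤ fidelity ρ τ) :
    petzRenyi α ρ σ + ((1 / (α - 1) * Real.logb 2 (1 / x) : ℝ) : EReal) ≤ dMax τ σ := by
  refine le_sInf ?_
  rintro _ ⟨l, rfl, hl⟩
  have hτσ : τ ≤ (2 : ℝ) ^ l • σ := by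
    rwa [← Complex.coe_smul, Matrix.le_iff]
  refine petzRenyi_add_le_coe hα₁ hx ?_
  calc
    x ≤ fidelity ρ τ := hxF
    _ ≤ petzQ α ρ τ := hρ.fidelity_le_petzQ hτ hα₀ hα₁.le
    _ ≤ petzQ α ρ ((2 : ℝ) ^ l • σ) := petzQ_le_petzQ hρ.1 hτ.1 hτσ hα₀ hα₁
    _ = (2 ^ l) ^ (1 - α) * petzQ α ρ σ := petzQ_smul ρ hσ (by positivity) α

lemma one_sub_sq_le_fidelity {ε : ℝ} (h : sineDist ρ τ ≤ ε) : 1 - ε ^ 2 ≤ fidelity ρ τ := by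
  have h_sq : 1 - fidelity ρ τ ≤ ε ^ 2 := (Real.sqrt_le_iff.mp h).2
  linarith

theorem petzRenyi_le_dMaxSmooth_general (hρ : IsState ρ) (hσ : σ.PosSemidef) {ε α : ℝ}
    (hε₀ : 0 ≤ ε) (hε₁ : ε < 1) (hα₀ : 0 ≤ α) (hα₁ : α < 1) :
    petzRenyi α ρ σ + ((1 / (α - 1) * Real.logb 2 (1 / (1 - ε ^ 2)) : ℝ) : EReal) ≤
      dMaxSmooth ε ρ σ := by
  have hε : 0 < 1 - ε ^ 2 := sub_pos.mpr (pow_lt_one₀ hε₀ hε₁ two_ne_zero)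
  exact le_iInf₂ fun τ hτ =>
    petzRenyi_add_le_dMax hρ hτ.1 hσ hα₀ hα₁ hε (one_sub_sq_le_fidelity hτ.2)

end Development

/-- Smoothed max-relative entropy lower bounded by the Petz–Rényi divergence. -/
theorem petzRenyi_le_dMaxSmooth {d : ℕ} (ρ σ : Matrix (Fin d) (Fin d) ℂ)
    (hρ : IsState ρ) (hσ : IsState σ) (ε : ℝ) (hε : 0 < ε ∧ ε < 1)
    (α : ℝ) (hα : 0 ≤ α ∧ α < 1) :
    petzRenyi α ρ σ + ((2 / (α - 1) * Real.logb 2 (1 / (1 - ε)) : ℝ) : EReal) ≤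
      dMaxSmooth ε ρ σ :=
  (add_le_add_right (EReal.coe_le_coe (two_div_mul_logb_le hε.1.le hε.2 hα.2.le)) _).trans
    (petzRenyi_le_dMaxSmooth_general hρ hσ.1 hε.1.le hε.2 hα.1 hα.2)

end QCD
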